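/- For each m ∈ ℕ, m ≥ 1, for every p₀ < p₁ in FIN_{±2m} and all j₀, j₁ with 0 ≤ j₀, j₁ ≤ k and min{j₀, j₁} = 0 (where k is such that the indicated iterated tetris images are defined), one has Φ_m(T^{2j₀}(p₀) + T^{2j₁}(p₁)) = T^{j₀}(Φ_m(p₀)) + T^{j₁}(Φ_m(p₁)). -/

import Mathlib

open Function Set

/-- `p` is an element of `FIN_{±k}`: finitely supported, values in `{0, ±1, …, ±k}`,
attaining one of the values `±k`. -/
def IsFin (k : ℕ) (p : ℕ → ℤ) : Prop :=
  (Function.support p).Finite ∧ (∀ n, |p n| ≤ (k : ℤ)) ∧ (∃ n, |p n| = (k : ℤ))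

/-- `p < q` in the block ordering: every point of `supp p` precedes every point of `supp q`. -/
def BlockLt (p q : ℕ → ℤ) : Prop :=
  ∀ m n : ℕ, p m ≠ 0 → q n ≠ 0 → m < n

/-- The tetris operation `T`. -/
def tetris (p : ℕ → ℤ) : ℕ → ℤ := fun n =>
  if 0 < p n then p n - 1 else if p n < 0 then p n + 1 else 0

/-- The sign-flipped tetris operation `-T`. -/
def negT (p : ℕ → ℤ) : ℕ → ℤ := -(tetris p)

/-- The weak tetris operation `S`. -/
def Sop (p : ℕ → ℤ) : ℕ → ℤ := fun n => if |p n| = 1 then 0 else p n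

/-- `‖p‖ ≤ c` for the `ℓ∞` norm. -/
def normLe (p : ℕ → ℤ) (c : ℕ) : Prop := ∀ n, |p n| ≤ (c : ℤ)

/-- `(A)_c`, the `c`-fattening of `A`. -/
def approx (c : ℕ) (A : Set (ℕ → ℤ)) : Set (ℕ → ℤ) :=
  {p | ∃ q ∈ A, normLe (p - q) c}

/-- `P` is an infinite block sequence in `FIN_{±k}`. -/
def IsBlockSeq (k : ℕ) (P : ℕ → ℕ → ℤ) : Prop :=
  (∀ n, IsFin k (P n)) ∧ ∀ m n : ℕ, m < n → BlockLt (P m) (P n)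

/-- `t` is a finite block sequence in `FIN_{±k}` (coded as a list). -/
def IsFinBlockSeq (k : ℕ) (t : List (ℕ → ℤ)) : Prop :=
  (∀ p ∈ t, IsFin k p) ∧ t.Pairwise BlockLt

/-- `q ∈ ⟨P⟩_{±k}`: `q = ε₀T^{j₀}(p_{n₀}) + ⋯ + ε_m T^{j_m}(p_{n_m})` with `n₀ < ⋯ < n_m`,
`εᵢ ∈ {±1}`, `jᵢ < k` and `min jᵢ = 0`. -/
def InSpanPM (k : ℕ) (P : ℕ → ℕ → ℤ) (q : ℕ → ℤ) : Prop :=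
  ∃ (m : ℕ) (n : Fin (m + 1) → ℕ) (ε : Fin (m + 1) → ℤ) (j : Fin (m + 1) → ℕ),
    StrictMono n ∧ (∀ i, ε i = 1 ∨ ε i = -1) ∧ (∀ i, j i < k) ∧ (∃ i, j i = 0) ∧
    q = ∑ i, ε i • tetris^[j i] (P (n i))

/-- `q ∈ ⟨P⟩_{(−T)}`. -/
def InSpanNegT (k : ℕ) (P : ℕ → ℕ → ℤ) (q : ℕ → ℤ) : Prop :=
  ∃ (m : ℕ) (n : Fin (m + 1) → ℕ) (j : Fin (m + 1) → ℕ),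
    StrictMono n ∧ (∀ i, j i < k) ∧ (∃ i, j i = 0) ∧
    q = ∑ i, negT^[j i] (P (n i))

/-- `q ∈ ⟨p_a, …, p_b⟩_{(−T)}`. -/
def InSpanNegTRange (k : ℕ) (P : ℕ → ℕ → ℤ) (a b : ℕ) (q : ℕ → ℤ) : Prop :=
  ∃ (m : ℕ) (n : Fin (m + 1) → ℕ) (j : Fin (m + 1) → ℕ),
    StrictMono n ∧ (∀ i, a ≤ n i ∧ n i ≤ b) ∧ (∀ i, j i < k) ∧ (∃ i, j i = 0) ∧
    q = ∑ i, negT^[j i] (P (n i))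

/-- A cofinite ultrafilter on `FIN_{±k}` (coded as an ultrafilter on `ℕ → ℤ`
concentrating on `FIN_{±k}`). -/
def IsCofiniteUF (k : ℕ) (𝒰 : Ultrafilter (ℕ → ℤ)) : Prop :=
  {p | IsFin k p} ∈ 𝒰 ∧ ∀ m : ℕ, {p : ℕ → ℤ | ∀ n < m, p n = 0} ∈ 𝒰

/-- `A ∈ 𝒰 + 𝒱`. -/
def SumMem (𝒰 𝒱 : Ultrafilter (ℕ → ℤ)) (A : Set (ℕ → ℤ)) : Prop :=
  {p | {q | BlockLt p q ∧ p + q ∈ A} ∈ 𝒱} ∈ 𝒰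

/-- `𝒰` is subsymmetric: `A ∈ 𝒰` implies `−(A)₁ ∈ 𝒰`. -/
def IsSubsymmetric (𝒰 : Ultrafilter (ℕ → ℤ)) : Prop :=
  ∀ A ∈ 𝒰, {p : ℕ → ℤ | -p ∈ approx 1 A} ∈ 𝒰

/-- `𝒰 + (−T)^j 𝒰 = (−T)^j 𝒰 + 𝒰 = 𝒰` for all `j ≤ k`. -/
def IsIdempotentUF (k : ℕ) (𝒰 : Ultrafilter (ℕ → ℤ)) : Prop :=
  ∀ j ≤ k, ∀ A : Set (ℕ → ℤ),
    (SumMem 𝒰 (Ultrafilter.map (negT^[j]) 𝒰) A ↔ A ∈ 𝒰) ∧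
    (SumMem (Ultrafilter.map (negT^[j]) 𝒰) 𝒰 A ↔ A ∈ 𝒰)

/-- A cofinite subsymmetric ultrafilter on `FIN_{±k}` idempotent with respect to
all the maps `(−T)^j`, `j ≤ k`. -/
def IsGowersUF (k : ℕ) (𝒰 : Ultrafilter (ℕ → ℤ)) : Prop :=
  IsCofiniteUF k 𝒰 ∧ IsSubsymmetric 𝒰 ∧ IsIdempotentUF k 𝒰

/-- A `𝒰`-tree on `FIN_{±k}` with stem `s`. -/
structure IsUTree (k : ℕ) (𝒰 : Ultrafilter (ℕ → ℤ)) (U : Set (List (ℕ → ℤ)))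
    (s : List (ℕ → ℤ)) : Prop where
  blocks : ∀ t ∈ U, IsFinBlockSeq k t
  prefixClosed : ∀ t ∈ U, ∀ t' : List (ℕ → ℤ), t' <+: t → t' ∈ U
  stemMem : s ∈ U
  stemComparable : ∀ t ∈ U, s <+: t ∨ t <+: s
  branch : ∀ t ∈ U, s <+: t → {p | t ++ [p] ∈ U} ∈ 𝒰

/-- `[U]`, the set of infinite branches of a tree of finite block sequences. -/
def Branches (U : Set (List (ℕ → ℤ))) : Set (ℕ → ℕ → ℤ) :=
  {P | ∀ n : ℕ, (List.ofFn fun i : Fin n => P i.1) ∈ U}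

/-- The space `FIN_{±k}^[∞]` of infinite block sequences. -/
def BlockSeq (k : ℕ) : Type := {P : ℕ → ℕ → ℤ // IsBlockSeq k P}

/-- The metrizable topology on `FIN_{±k}^[∞]`, generated by the basic sets `[s]`. -/
instance BlockSeq.topology (k : ℕ) : TopologicalSpace (BlockSeq k) :=
  TopologicalSpace.generateFrom
    {O | ∃ s : List (ℕ → ℤ),
      O = {P : BlockSeq k | ∀ i : Fin s.length, P.1 i.1 = s.get i}}

/-- The Souslin operation applied to a Souslin scheme. -/
def SouslinOp {α : Type*} (F : List ℕ → Set α) : Set α :=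
  ⋃ x : ℕ → ℕ, ⋂ n : ℕ, F (List.ofFn fun i : Fin n => x i.1)

/-- `A` is Souslin measurable: it belongs to every field of sets containing the open
sets and closed under the Souslin operation. -/
def SouslinMeasurable {α : Type*} [TopologicalSpace α] (A : Set α) : Prop :=
  ∀ 𝓕 : Set (Set α),
    (∀ O : Set α, IsOpen O → O ∈ 𝓕) →
    (∀ B ∈ 𝓕, Bᶜ ∈ 𝓕) →
    (∀ B ∈ 𝓕, ∀ C ∈ 𝓕, B ∪ C ∈ 𝓕) →
    (∀ F : List ℕ → Set α, (∀ s, F s ∈ 𝓕) → SouslinOp F ∈ 𝓕) →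
    A ∈ 𝓕

/-- The map `Φ_m : FIN_{±2m} → FIN_{±m}` (its defining formula does not depend on `m`). -/
def Phi (p : ℕ → ℤ) : ℕ → ℤ := fun n =>
  if p n % 2 = 0 then p n / 2
  else if 0 < p n then (p n - 1) / 2
  else (p n + 1) / 2

/-- `Ψ = Φ_k ∘ Φ_{2k} : FIN_{±4k} → FIN_{±k}`. -/
def Psi (p : ℕ → ℤ) : ℕ → ℤ := Phi (Phi p)

/-!
Both operations act coordinatewise: `T` moves an integer one step towards `0`, and `Φ` halves it,
truncating towards `0`. Two steps towards `0` before halving amount to one step after it, so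
`Φ ∘ T² = T ∘ Φ`. Since `T` does not enlarge supports, the two summands remain disjointly supported,
and `Φ` is additive on such pairs because it sends `0` to `0`.
-/

theorem tetris_apply (p : ℕ → ℤ) (n : ℕ) : tetris p n = p n - (p n).sign := by
  unfold tetris
  obtain h | h | h := lt_trichotomy (p n) 0
  · simp [h, h.not_gt, Int.sign_eq_neg_one_of_neg h]
  · simp [h]
  · simp [h, Int.sign_eq_one_of_pos h]

theorem Phi_apply (p : ℕ → ℤ) (n : ℕ) : Phi p n = (p n).tdiv 2 := by
  unfold Phi
  obtain h | h := le_or_gt 0 (p n)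
  · rw [Int.tdiv_eq_ediv_of_nonneg h]
    split_ifs <;> omega
  · rw [← neg_neg (p n), Int.neg_tdiv, Int.tdiv_eq_ediv_of_nonneg (by omega)]
    split_ifs <;> omega

theorem support_tetris_subset (p : ℕ → ℤ) : support (tetris p) ⊆ support p :=
  support_subset_iff'.2 fun n hn => by
    rw [tetris_apply, notMem_support.1 hn, Int.sign_zero, sub_zero]

theorem support_tetris_iterate_subset (j : ℕ) (p : ℕ → ℤ) :
    support (tetris^[j] p) ⊆ support p := by
  induction j with
  | zero => rfl
  | succ j ih =>
    rw [iterate_succ_apply']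
    exact (support_tetris_subset _).trans ih

theorem tdiv_two_sub_sign_sub_sign (a : ℤ) :
    (a - a.sign - (a - a.sign).sign).tdiv 2 = a.tdiv 2 - (a.tdiv 2).sign := by
  wlog ha : 0 ≤ a generalizing a
  · have h := this (-a) (by omega)
    simp only [Int.sign_neg, Int.neg_tdiv, ← neg_sub', neg_inj] at h
    exact h
  obtain rfl | rfl | ha : a = 0 ∨ a = 1 ∨ 2 ≤ a := by omega
  · rfl
  · rfl
  · have hsign : a.sign = 1 := Int.sign_eq_one_of_pos (by omega)
    have hsign' : (a - 1).sign = 1 := Int.sign_eq_one_of_pos (by omega)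
    have hdiv : a.tdiv 2 = a / 2 := Int.tdiv_eq_ediv_of_nonneg (by omega)
    have hsign_div : (a / 2).sign = 1 := Int.sign_eq_one_of_pos (by omega)
    calc (a - a.sign - (a - a.sign).sign).tdiv 2
        = (a - 1 - 1).tdiv 2 := by rw [hsign, hsign']
      _ = (a - 1 - 1) / 2 := Int.tdiv_eq_ediv_of_nonneg (by omega)
      _ = a / 2 - 1 := by omega
      _ = a.tdiv 2 - (a.tdiv 2).sign := by rw [hdiv, hsign_div]

theorem Phi_semiconj_tetris : Semiconj Phi tetris^[2] tetris := by
  intro p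
  funext n
  simp only [iterate_succ_apply, iterate_zero_apply, Phi_apply, tetris_apply,
    tdiv_two_sub_sign_sub_sign]

theorem Phi_tetris_iterate (j : ℕ) (p : ℕ → ℤ) :
    Phi (tetris^[2 * j] p) = tetris^[j] (Phi p) := by
  rw [iterate_mul]
  exact Phi_semiconj_tetris.iterate_right j p

theorem Phi_add_of_disjoint_support {p q : ℕ → ℤ} (h : Disjoint (support p) (support q)) :
    Phi (p + q) = Phi p + Phi q := by
  funext n
  simp only [Pi.add_apply, Phi_apply]
  by_cases hp : p n = 0
  · rw [hp, zero_add, Int.zero_tdiv, zero_add]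
  · have hq : q n = 0 := notMem_support.1 (h.notMem_of_mem_left hp)
    rw [hq, add_zero, Int.zero_tdiv, add_zero]

theorem BlockLt.disjoint_support {p q : ℕ → ℤ} (h : BlockLt p q) :
    Disjoint (support p) (support q) :=
  Set.disjoint_left.2 fun n hp hq => (h n n hp hq).false

theorem Phi_tetris_compat_general {p₀ p₁ : ℕ → ℤ} (h : Disjoint (support p₀) (support p₁))
    (j₀ j₁ : ℕ) :
    Phi (tetris^[2 * j₀] p₀ + tetris^[2 * j₁] p₁) =
      tetris^[j₀] (Phi p₀) + tetris^[j₁] (Phi p₁) := by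
  have hT : Disjoint (support (tetris^[2 * j₀] p₀)) (support (tetris^[2 * j₁] p₁)) :=
    h.mono (support_tetris_iterate_subset _ _) (support_tetris_iterate_subset _ _)
  rw [Phi_add_of_disjoint_support hT, Phi_tetris_iterate, Phi_tetris_iterate]

/-- for `p₀ < p₁` in `FIN_{±2m}` and `j₀, j₁` with `min{j₀, j₁} = 0`
(in the range where the iterated tetris images are defined),
`Φ_m(T^{2j₀}(p₀) + T^{2j₁}(p₁)) = T^{j₀}(Φ_m(p₀)) + T^{j₁}(Φ_m(p₁))`. -/
theorem Phi_tetris_compat (m : ℕ) (hm : 1 ≤ m) (p₀ p₁ : ℕ → ℤ)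
    (h₀ : IsFin (2 * m) p₀) (h₁ : IsFin (2 * m) p₁) (hlt : BlockLt p₀ p₁)
    (j₀ j₁ : ℕ) (hj₀ : j₀ ≤ m) (hj₁ : j₁ ≤ m) (hmin : j₀ = 0 ∨ j₁ = 0) :
    Phi (tetris^[2 * j₀] p₀ + tetris^[2 * j₁] p₁) =
      tetris^[j₀] (Phi p₀) + tetris^[j₁] (Phi p₁) := by
  exact Phi_tetris_compat_general hlt.disjoint_support j₀ j₁
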